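/- arXiv:1304.6237 — 2 statements merged into one kernel-verified Lean document; each statement's English description precedes it below -/
import Mathlib

section
/- Let M be a positive integer, y ∈ ℝ^M, let Q ∈ ℝ^{M×M} and P ∈ ℝ^{T×T} be symmetric positive definite matrices, let g : ℝ^T → ℝ^K be a map, H ∈ ℝ^{M×K}, c > 0, μ ∈ ℝ^T, and set β = 1/(M+2). Define A(ϑ) = ‖y − c⁻¹ H g(ϑ)‖²_{Q⁻¹}, J(ϑ, s) = −((M+2)/2)·ln s − A(ϑ)/(2s) − (1/2)‖μ − ϑ‖²_{P⁻¹} for s > 0, and the concentrated cost V(ϑ) = (1/2)·ln A(ϑ) + (β/2)·‖μ − ϑ‖²_{P⁻¹}. Then for every ϑ with A(ϑ) > 0, sup_{s > 0} J(ϑ, s) = −(M+2)·V(ϑ) + ((M+2)/2)·(ln(M+2) − 1). Consequently, on any set S ⊆ ℝ^T on which A is strictly positive, ϑ* minimizes V over S if and only if ϑ* maximizes ϑ ↦ sup_{s>0} J(ϑ, s) over S. -/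
open Matrix

/-- Concentration of the MAP cost: with `A(ϑ) = ‖y - c⁻¹ H g(ϑ)‖²_{Q⁻¹}`,
`J(ϑ, s) = -((M+2)/2)·ln s - A(ϑ)/(2s) - (1/2)‖μ - ϑ‖²_{P⁻¹}` and
`V(ϑ) = (1/2)·ln A(ϑ) + (β/2)·‖μ - ϑ‖²_{P⁻¹}` with `β = 1/(M+2)`, one has
`sup_{s>0} J(ϑ, s) = -(M+2)·V(ϑ) + ((M+2)/2)(ln(M+2) - 1)` whenever `A(ϑ) > 0`;
hence minimizing `V` over a set where `A > 0` is equivalent to maximizing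
`ϑ ↦ sup_{s>0} J(ϑ, s)` over that set. -/
theorem stmt_1 (M T K : ℕ) (hM : 0 < M) (hT : 0 < T) (hK : 0 < K)
    (y : Fin M → ℝ)
    (Q : Matrix (Fin M) (Fin M) ℝ) (hQsymm : Q.IsSymm) (hQ : Q.PosDef)
    (P : Matrix (Fin T) (Fin T) ℝ) (hPsymm : P.IsSymm) (hP : P.PosDef)
    (g : (Fin T → ℝ) → (Fin K → ℝ)) (H : Matrix (Fin M) (Fin K) ℝ)
    (c : ℝ) (hc : 0 < c) (μ : Fin T → ℝ)
    (β : ℝ) (hβ : β = 1 / (M + 2))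
    (A : (Fin T → ℝ) → ℝ)
    (hA : ∀ ϑ, A ϑ =
      (y - c⁻¹ • (H *ᵥ g ϑ)) ⬝ᵥ (Q⁻¹ *ᵥ (y - c⁻¹ • (H *ᵥ g ϑ))))
    (J : (Fin T → ℝ) → ℝ → ℝ)
    (hJ : ∀ ϑ s, J ϑ s =
      -((M + 2 : ℝ) / 2) * Real.log s - A ϑ / (2 * s)
        - (1 / 2) * ((μ - ϑ) ⬝ᵥ (P⁻¹ *ᵥ (μ - ϑ))))
    (V : (Fin T → ℝ) → ℝ)
    (hV : ∀ ϑ, V ϑ =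
      (1 / 2) * Real.log (A ϑ) + (β / 2) * ((μ - ϑ) ⬝ᵥ (P⁻¹ *ᵥ (μ - ϑ)))) :
    (∀ ϑ : Fin T → ℝ, 0 < A ϑ →
      sSup {v : ℝ | ∃ s : ℝ, 0 < s ∧ v = J ϑ s} =
        -(M + 2 : ℝ) * V ϑ + ((M + 2 : ℝ) / 2) * (Real.log (M + 2) - 1)) ∧
    (∀ S : Set (Fin T → ℝ), (∀ ϑ ∈ S, 0 < A ϑ) →
      ∀ ϑstar ∈ S,
        ((∀ ϑ ∈ S, V ϑstar ≤ V ϑ) ↔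
          (∀ ϑ ∈ S,
            sSup {v : ℝ | ∃ s : ℝ, 0 < s ∧ v = J ϑ s} ≤
              sSup {v : ℝ | ∃ s : ℝ, 0 < s ∧ v = J ϑstar s}))) := by
  have hn : (0 : ℝ) < (M : ℝ) + 2 := by positivity
  have key : ∀ ϑ : Fin T → ℝ, 0 < A ϑ →
      sSup {v : ℝ | ∃ s : ℝ, 0 < s ∧ v = J ϑ s} =
        -(M + 2 : ℝ) * V ϑ + ((M + 2 : ℝ) / 2) * (Real.log (M + 2) - 1) := by
    intro ϑ hpos
    have hJ' := hJ ϑ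
    rw [hV ϑ, hβ]
    generalize (μ - ϑ) ⬝ᵥ (P⁻¹ *ᵥ (μ - ϑ)) = q at *
    generalize A ϑ = a at *
    generalize (M : ℝ) + 2 = n at *
    have e : -n * (1 / 2 * Real.log a + 1 / n / 2 * q) + n / 2 * (Real.log n - 1)
        = -(n / 2) * (Real.log a - Real.log n + 1) - 1 / 2 * q := by
      field_simp
      ring
    rw [e]
    apply IsGreatest.csSup_eq
    constructor
    · refine ⟨a / n, by positivity, ?_⟩
      rw [hJ', Real.log_div hpos.ne' hn.ne']
      have : a / (2 * (a / n)) = n / 2 := by field_simp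
      rw [this]
      ring
    · rintro v ⟨s, hs, rfl⟩
      rw [hJ']
      have h := Real.log_le_sub_one_of_pos (show 0 < a / (n * s) by positivity)
      rw [Real.log_div hpos.ne' (by positivity), Real.log_mul hn.ne' hs.ne'] at h
      have h2 : a / (2 * s) = n / 2 * (a / (n * s)) := by field_simp
      rw [h2]
      have h3 := mul_le_mul_of_nonneg_left h (show 0 ≤ n / 2 by positivity)
      linarith
  refine ⟨key, fun S hS ϑstar hstar => ?_⟩
  refine forall₂_congr fun ϑ hϑ => ?_
  rw [key ϑ (hS ϑ hϑ), key ϑstar (hS ϑstar hstar)]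
  constructor
  · intro h
    have := mul_le_mul_of_nonneg_left h hn.le
    linarith
  · intro h
    refine le_of_mul_le_mul_left ?_ hn
    linarith
end

section
/- Let M and T be positive integers, ỹ ∈ ℝ^M, G ∈ ℝ^{M×T}, μ̃ ∈ ℝ^T, β > 0, and let Q ∈ ℝ^{M×M} and P ∈ ℝ^{T×T} be symmetric positive definite. Define V_ℓ(x) = (1/2)·ln ‖ỹ − G x‖²_{Q⁻¹} + (β/2)·‖μ̃ − x‖²_{P⁻¹} and α(x) = 1/‖ỹ − G x‖²_{Q⁻¹}. Then for every x ∈ ℝ^T with ỹ − G x ≠ 0, the gradient of V_ℓ vanishes at x if and only if x = (α(x)·Gᵀ Q⁻¹ G + β·P⁻¹)⁻¹ (α(x)·Gᵀ Q⁻¹ ỹ + β·P⁻¹ μ̃); that is, the stationary points of the linearized concentrated cost are exactly the fixed points of the proposed fixed-point iteration map. -/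
open Matrix

theorem quad_hasGradientAt {M T : ℕ} (c : Fin M → ℝ) (A : Matrix (Fin M) (Fin T) ℝ)
    (W : Matrix (Fin M) (Fin M) ℝ) (hW : W.IsSymm) (x : EuclideanSpace ℝ (Fin T)) :
    HasGradientAt (fun z : EuclideanSpace ℝ (Fin T) =>
      (c - A *ᵥ (WithLp.equiv 2 (Fin T → ℝ) z)) ⬝ᵥ
        (W *ᵥ (c - A *ᵥ (WithLp.equiv 2 (Fin T → ℝ) z))))
      (WithLp.toLp 2 ((-2 : ℝ) • (Aᵀ *ᵥ (W *ᵥ (c - A *ᵥ (WithLp.equiv 2 (Fin T → ℝ) x)))))) x := by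
  rw [hasGradientAt_iff_hasFDerivAt]
  let L : EuclideanSpace ℝ (Fin T) →L[ℝ] (Fin M → ℝ) :=
    LinearMap.toContinuousLinearMap
      ((Matrix.mulVecLin A).comp (WithLp.linearEquiv 2 ℝ (Fin T → ℝ)).toLinearMap)
  let K : (Fin M → ℝ) →L[ℝ] (Fin M → ℝ) := LinearMap.toContinuousLinearMap (Matrix.mulVecLin W)
  have hL : ∀ z, L z = A *ᵥ (WithLp.equiv 2 (Fin T → ℝ) z) := fun z => rfl
  have hK : ∀ z, K z = W *ᵥ z := fun z => rfl
  have hu : HasFDerivAt (fun z => c - L z) (-L) x := L.hasFDerivAt.const_sub c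
  have hv : HasFDerivAt (fun z => K (c - L z)) (K.comp (-L)) x := K.hasFDerivAt.comp x hu
  have hd := HasFDerivAt.fun_sum (u := Finset.univ) (fun i _ =>
    ((hasFDerivAt_pi'.1 hu) i).mul ((hasFDerivAt_pi'.1 hv) i))
  refine HasFDerivAt.congr_fderiv (f := fun z => ∑ i, (c - L z) i * K (c - L z) i) hd ?_
  ext h
  have e1 : ∀ r : Fin M → ℝ, r ⬝ᵥ (W *ᵥ (L h)) = (W *ᵥ r) ⬝ᵥ L h := by
    intro r
    rw [Matrix.dotProduct_mulVec, ← Matrix.mulVec_transpose, hW.eq]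
  have e2 : ∀ r : Fin M → ℝ, (Aᵀ *ᵥ r) ⬝ᵥ (WithLp.equiv 2 (Fin T → ℝ) h) = r ⬝ᵥ L h := by
    intro r
    rw [hL, Matrix.dotProduct_mulVec, Matrix.mulVec_transpose]
  set r := c - L x with hr
  have lhs : (∑ i, (r i • (ContinuousLinearMap.proj (R := ℝ) (φ := fun _ : Fin M => ℝ) i).comp
      (K.comp (-L)) + K r i • (ContinuousLinearMap.proj (R := ℝ) (φ := fun _ : Fin M => ℝ) i).comp
      (-L))) h = - (r ⬝ᵥ (W *ᵥ (L h))) - (W *ᵥ r) ⬝ᵥ L h := by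
    simp [ContinuousLinearMap.sum_apply, dotProduct, hK, Finset.sum_add_distrib]
    ring
  refine lhs.trans ?_
  rw [e1, InnerProductSpace.toDual_apply_apply, EuclideanSpace.inner_eq_star_dotProduct]
  rw [← hL, ← hr]
  have := e2 (W *ᵥ r)
  change _ = (WithLp.equiv 2 (Fin T → ℝ) h) ⬝ᵥ ((-2 : ℝ) • (Aᵀ *ᵥ (W *ᵥ r)))
  rw [dotProduct_comm, dotProduct_comm _ ((-2 : ℝ) • _), smul_dotProduct, this, dotProduct_comm, smul_eq_mul]
  ring

/-- For the linearized concentrated cost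
`V_ℓ(x) = (1/2)·ln ‖ỹ - Gx‖²_{Q⁻¹} + (β/2)·‖μ̃ - x‖²_{P⁻¹}` and
`α(x) = 1/‖ỹ - Gx‖²_{Q⁻¹}`, at every `x` with `ỹ - Gx ≠ 0` the gradient of
`V_ℓ` vanishes iff `x = (α(x)·Gᵀ Q⁻¹ G + β·P⁻¹)⁻¹ (α(x)·Gᵀ Q⁻¹ ỹ + β·P⁻¹ μ̃)`:
the stationary points are exactly the fixed points of the fixed-point map. -/
theorem stmt_6 (M T : ℕ) (hM : 0 < M) (hT : 0 < T)
    (ytil : Fin M → ℝ) (G : Matrix (Fin M) (Fin T) ℝ) (μtil : Fin T → ℝ)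
    (β : ℝ) (hβ : 0 < β)
    (Q : Matrix (Fin M) (Fin M) ℝ) (hQsymm : Q.IsSymm) (hQ : Q.PosDef)
    (P : Matrix (Fin T) (Fin T) ℝ) (hPsymm : P.IsSymm) (hP : P.PosDef)
    (x : EuclideanSpace ℝ (Fin T))
    (hx : ytil - G *ᵥ (WithLp.equiv 2 (Fin T → ℝ) x) ≠ 0) :
    gradient
      (fun z : EuclideanSpace ℝ (Fin T) =>
        (1 / 2) * Real.log ((ytil - G *ᵥ (WithLp.equiv 2 (Fin T → ℝ) z)) ⬝ᵥ
            (Q⁻¹ *ᵥ (ytil - G *ᵥ (WithLp.equiv 2 (Fin T → ℝ) z))))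
          + (β / 2) * ((μtil - WithLp.equiv 2 (Fin T → ℝ) z) ⬝ᵥ
            (P⁻¹ *ᵥ (μtil - WithLp.equiv 2 (Fin T → ℝ) z)))) x = 0 ↔
    WithLp.equiv 2 (Fin T → ℝ) x =
      ((1 / ((ytil - G *ᵥ (WithLp.equiv 2 (Fin T → ℝ) x)) ⬝ᵥ
          (Q⁻¹ *ᵥ (ytil - G *ᵥ (WithLp.equiv 2 (Fin T → ℝ) x))))) •
            (Gᵀ * Q⁻¹ * G) + β • P⁻¹)⁻¹ *ᵥ
        ((1 / ((ytil - G *ᵥ (WithLp.equiv 2 (Fin T → ℝ) x)) ⬝ᵥ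
          (Q⁻¹ *ᵥ (ytil - G *ᵥ (WithLp.equiv 2 (Fin T → ℝ) x))))) •
            (Gᵀ *ᵥ (Q⁻¹ *ᵥ ytil)) + β • (P⁻¹ *ᵥ μtil)) := by
  have hQi : Q⁻¹.PosDef := hQ.inv
  have hPi : P⁻¹.PosDef := hP.inv
  have hQs : Q⁻¹.IsSymm := by
    rw [Matrix.IsSymm, Matrix.transpose_nonsing_inv, hQsymm.eq]
  have hPs : P⁻¹.IsSymm := by
    rw [Matrix.IsSymm, Matrix.transpose_nonsing_inv, hPsymm.eq]
  have h1 := quad_hasGradientAt ytil G Q⁻¹ hQs x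
  have h2 := quad_hasGradientAt μtil 1 P⁻¹ hPs x
  simp only [Matrix.one_mulVec, Matrix.transpose_one] at h2
  set w := WithLp.equiv 2 (Fin T → ℝ) x with hw
  have hpos : 0 < (ytil - G *ᵥ w) ⬝ᵥ (Q⁻¹ *ᵥ (ytil - G *ᵥ w)) := by
    simpa using hQi.dotProduct_mulVec_pos hx
  have hg := ((h1.hasFDerivAt.log hpos.ne').const_mul (1 / 2 : ℝ)).add
    (h2.hasFDerivAt.const_mul (β / 2))
  set s := (ytil - G *ᵥ w) ⬝ᵥ (Q⁻¹ *ᵥ (ytil - G *ᵥ w)) with hs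
  have hgrad := hg.hasGradientAt.gradient
  have key : IsUnit ((1 / s) • (Gᵀ * Q⁻¹ * G) + β • P⁻¹) := by
    have a : (Gᵀ * Q⁻¹ * G).PosSemidef := by
      simpa using hQi.posSemidef.conjTranspose_mul_mul_same G
    exact (Matrix.PosDef.posSemidef_add (a.smul (by positivity)) (hPi.smul hβ)).isUnit
  have hdet := (Matrix.isUnit_iff_isUnit_det _).1 key
  set N := (1 / s) • (Gᵀ * Q⁻¹ * G) + β • P⁻¹ with hN
  set b := (1 / s) • (Gᵀ *ᵥ (Q⁻¹ *ᵥ ytil)) + β • (P⁻¹ *ᵥ μtil) with hb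
  have hfix : w = N⁻¹ *ᵥ b ↔ N *ᵥ w - b = 0 := by
    rw [sub_eq_zero]
    constructor
    · intro h
      rw [h, Matrix.mulVec_mulVec, Matrix.mul_nonsing_inv _ hdet, Matrix.one_mulVec]
    · intro h
      rw [← h, Matrix.mulVec_mulVec, Matrix.nonsing_inv_mul _ hdet, Matrix.one_mulVec]
  have hval : N *ᵥ w - b = -((1 / s) • (Gᵀ *ᵥ (Q⁻¹ *ᵥ (ytil - G *ᵥ w))))
      - β • (P⁻¹ *ᵥ (μtil - w)) := by
    simp only [hN, hb, Matrix.add_mulVec, Matrix.smul_mulVec, Matrix.mulVec_sub,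
      Matrix.mulVec_mulVec, smul_sub, Matrix.mul_assoc]
    abel
  rw [hfix, hval]
  refine (Eq.congr_left (hgrad.trans ?_)).trans
    (WithLp.toLp_eq_zero 2 (V := Fin T → ℝ))
  simp only [map_add, map_smul, LinearIsometryEquiv.symm_apply_apply, ← hw]
  ext i
  simp
  ring
end
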